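/- Let X be a separable Hilbert space, N ≥ 1 an integer, Λ ⊂ ℕ an infinite Hadamard lacunary set, and f ∈ H²_Λ(𝔻, X) with (f̂(k))_{k≥0} completely relatively compact in X. Then f is cyclic for the operator S*^N on H²(𝔻, X) if and only if for every m ≥ 0 the closed linear span in X^N of the vectors (f̂(Nk), f̂(Nk+1), …, f̂(Nk+N−1)) over all k ≥ m equals X^N, where X^N is the N-fold Hilbert direct sum of X. -/

import Mathlib

open scoped InnerProductSpace ENNReal
noncomputable section

/-- The Hardy space `H²(𝔻, X)` identified with `ℓ²(ℕ, X)`. -/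
abbrev H2 (X : Type*) [NormedAddCommGroup X] [InnerProductSpace ℂ X] : Type _ :=
  lp (fun _ : ℕ => X) 2

variable {X : Type*} [NormedAddCommGroup X] [InnerProductSpace ℂ X]

/-- The backward shift `S*` on `H²(𝔻, X)`. -/
def bshift (f : H2 X) : H2 X :=
  ⟨fun n => f (n + 1), by
    have h : Summable fun n : ℕ => ‖f n‖ ^ (2 : ℝ≥0∞).toReal :=
      (memℓp_gen_iff (by norm_num)).1 (lp.memℓp f)
    exact memℓp_gen ((summable_nat_add_iff 1).2 h)⟩

/-- `E_F`: the smallest closed `S*`-invariant subspace containing the family `F`. -/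
def EF (F : Set (H2 X)) : Submodule ℂ (H2 X) :=
  (Submodule.span ℂ {g : H2 X | ∃ f ∈ F, ∃ n : ℕ, g = bshift^[n] f}).topologicalClosure

/-- `E_f` for a single function. -/
def Ef (f : H2 X) : Submodule ℂ (H2 X) :=
  EF {f}

/-- `X_*(F) = ⋂_m closed-span {f̂(k) : k ≥ m, f ∈ F}`. -/
def XstarF (F : Set (H2 X)) : Submodule ℂ X :=
  ⨅ m : ℕ, (Submodule.span ℂ {x : X | ∃ f ∈ F, ∃ k ≥ m, x = f k}).topologicalClosure

def Xstar (f : H2 X) : Submodule ℂ X := XstarF {f}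

/-- `P : X → X` is an orthogonal projection: idempotent and self-adjoint. -/
def IsOrthoProj {Y : Type*} [NormedAddCommGroup Y] [InnerProductSpace ℂ Y]
    (P : Y →L[ℂ] Y) : Prop :=
  (∀ x, P (P x) = P x) ∧ ∀ x y, ⟪P x, y⟫_ℂ = ⟪x, P y⟫_ℂ

/-- A sequence in a Hilbert space is completely relatively compact if for every orthogonal
projection `P` the normalized sequence `{P aₖ / ‖P aₖ‖ : P aₖ ≠ 0}` is relatively compact. -/
def CRC {Y : Type*} [NormedAddCommGroup Y] [InnerProductSpace ℂ Y] (a : ℕ → Y) : Prop :=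
  ∀ P : Y →L[ℂ] Y, IsOrthoProj P →
    IsCompact (closure {v : Y | ∃ k, P (a k) ≠ 0 ∧ v = ‖P (a k)‖⁻¹ • P (a k)})

/-- A subset of `ℕ` is Hadamard lacunary. -/
def HadLac (Λ : Set ℕ) : Prop :=
  ∃ d : ℝ, 1 < d ∧ ∀ m ∈ Λ, ∀ n ∈ Λ, m < n → d * m ≤ n

/-- The Fourier spectrum. -/
def spec (f : H2 X) : Set ℕ := {k : ℕ | f k ≠ 0}

/-- `H²(𝔻, Y)` for a subspace `Y ⊆ X`, as a submodule of `H²(𝔻, X)`. -/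
def H2sub (Y : Submodule ℂ X) : Submodule ℂ (H2 X) where
  carrier := {g : H2 X | ∀ n, g n ∈ Y}
  add_mem' := by
    intro a b ha hb n
    have : (↑(a + b) : ∀ _ : ℕ, X) n = a n + b n := by
      rw [lp.coeFn_add]; rfl
    rw [this]
    exact Y.add_mem (ha n) (hb n)
  zero_mem' := by
    intro n
    have : (↑(0 : H2 X) : ∀ _ : ℕ, X) n = 0 := by rw [lp.coeFn_zero]; rfl
    rw [this]
    exact Y.zero_mem
  smul_mem' := by
    intro c a ha n
    have : (↑(c • a) : ∀ _ : ℕ, X) n = c • a n := by rw [lp.coeFn_smul]; rfl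
    rw [this]
    exact Y.smul_mem c (ha n)

/-- A polynomial: finitely many nonzero Taylor coefficients. -/
def PolyH2 (f : H2 X) : Prop := {n : ℕ | f n ≠ 0}.Finite


/-- `X_∞(f)`: the closed span of all closed subspaces `Y ⊆ X` with
`H²(𝔻, Y) ⊆ E_{S*^N f}` for every `N ≥ 0`. -/
def Xinf (f : H2 X) : Submodule ℂ X :=
  (Submodule.span ℂ {x : X | ∃ Y : Submodule ℂ X, IsClosed (Y : Set X) ∧
      (∀ N : ℕ, H2sub Y ≤ Ef (bshift^[N] f)) ∧ x ∈ Y}).topologicalClosure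

/-- The smallest closed `S*^N`-invariant subspace containing `f`;
`f` is cyclic for `S*^N` iff this equals `⊤`. -/
def EfPow (f : H2 X) (N : ℕ) : Submodule ℂ (H2 X) :=
  (Submodule.span ℂ {g : H2 X | ∃ k : ℕ, g = bshift^[N * k] f}).topologicalClosure


/-!
Suppose `g` is orthogonal to `S*^{Nk} f` for every `k`, i.e. `∑ⱼ ⟪ĝ(j), f̂(j + Nk)⟫ = 0`, and fix
a small `i` and a large `n = i + Nk` in the spectrum of `f`. The large gaps of the spectrum kill
the terms with `j < i`, so `⟪ĝ(i), f̂(n)⟫` is controlled by the pairs `ĝ(i + d), f̂(n + d)` with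
`d > 0`. Let `bₙ` be the norm of the projection of `f̂(n)` onto the closed span of the `ĝ(i)`,
`i ≡ n (mod N)`. Complete relative compactness bounds `bₙ` by finitely many of the
`|⟪ĝ(i), f̂(n)⟫|`, whence, by Cauchy–Schwarz, `bₙ² ≤ hₙ ∑_{k ≥ n} bₖ²`, where `hₙ` sums `|ĝ|²`
over shifts of the differences `n' - n > 0`, with `n'` in the spectrum. Each difference occurs
boundedly often, so `∑ hₙ < ∞`, and the inequality forces `bₙ = 0` for large `n`: eventually the
orthogonality relations hold term by term. Then every block of `g` is orthogonal to all late
blocks of `f`.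
-/

section Differences

open Filter

/-- Sets of naturals in which every positive difference is attained a uniformly bounded number of
times: a weak form of Hadamard lacunarity. -/
def BoundedDifferences (Λ : Set ℕ) : Prop :=
  ∃ R : ℕ, ∀ d : ℕ+, {n | n ∈ Λ ∧ n + d ∈ Λ}.encard ≤ R

/-- The positive differences `n' - n` with `n, n' ∈ Λ`; empty when `n ∉ Λ`. -/
def differencesFrom (Λ : Set ℕ) (n : ℕ) : Set ℕ+ := {d | n ∈ Λ ∧ n + d ∈ Λ}

variable {Λ : Set ℕ}

theorem HadLac.mono {Λ' : Set ℕ} (hΛ : HadLac Λ) (h : Λ' ⊆ Λ) : HadLac Λ' :=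
  let ⟨δ, hδ, hratio⟩ := hΛ
  ⟨δ, hδ, fun m hm n hn => hratio m (h hm) n (h hn)⟩

theorem pow_card_mul_le_of_ratio_le {δ : ℝ} (hδ : 0 ≤ δ)
    (hratio : ∀ m ∈ Λ, ∀ n ∈ Λ, m < n → δ * m ≤ n) {a : ℕ} {s : Finset ℕ} :
    ∀ {y : ℕ}, y ∈ Λ → a ≤ y → (∀ x ∈ s, x ∈ Λ ∧ a ≤ x ∧ x < y) → δ ^ s.card * a ≤ y := by
  induction s using Finset.induction_on_max with
  | empty => intro y _ hay _; simpa using hay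
  | insert x s hlt ih =>
    intro y hy _ hs
    obtain ⟨hx, hax, hxy⟩ := hs x (Finset.mem_insert_self x s)
    have hsx : δ ^ s.card * a ≤ x :=
      ih hx hax fun z hz => ⟨(hs z (Finset.mem_insert_of_mem hz)).1,
        (hs z (Finset.mem_insert_of_mem hz)).2.1, hlt z hz⟩
    rw [Finset.card_insert_of_notMem fun h => (hlt x h).false]
    calc δ ^ (s.card + 1) * a = δ * (δ ^ s.card * a) := by ring
      _ ≤ δ * x := by gcongr
      _ ≤ y := hratio x hx y hy hxy

theorem HadLac.boundedDifferences (hΛ : HadLac Λ) : BoundedDifferences Λ := by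
  obtain ⟨δ, hδ, hratio⟩ := hΛ
  have hδ' : 0 < δ - 1 := sub_pos.2 hδ
  obtain ⟨R, hR⟩ := pow_unbounded_of_one_lt (δ / (δ - 1)) hδ
  refine ⟨R, fun d => not_lt.1 fun hcard => ?_⟩
  obtain ⟨t, ht, htcard⟩ := Set.exists_subset_encard_eq (Order.add_one_le_of_lt hcard)
  lift t to Finset ℕ using Set.finite_of_encard_eq_coe (k := R + 1) (by exact_mod_cast htcard)
  have htR : t.card = R + 1 := by exact_mod_cast htcard
  have htne : t.Nonempty := Finset.card_pos.1 (by omega)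
  set n := t.max' htne with hn
  have hnt : n ∈ t := t.max'_mem htne
  obtain ⟨hnΛ, hndΛ⟩ := ht hnt
  -- The `R` smaller elements, translated by `d`, lie in `Λ ∩ [d, n + d)`, so `n + d` is large...
  have hgrowth : δ ^ R * d ≤ n + d := by
    have := pow_card_mul_le_of_ratio_le (zero_le_one.trans hδ.le) hratio
      (s := (t.erase n).map (addRightEmbedding (d : ℕ))) hndΛ (Nat.le_add_left _ _) (by
        simp only [Finset.mem_map, addRightEmbedding_apply, forall_exists_index, and_imp]
        rintro _ x hx rfl
        have hxn : x < n := t.lt_max'_of_mem_erase_max' htne hx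
        exact ⟨(ht (Finset.mem_of_mem_erase hx)).2, Nat.le_add_left _ _, by omega⟩)
    rw [Finset.card_map, Finset.card_erase_of_mem hnt, htR, Nat.add_sub_cancel] at this
    exact_mod_cast this
  -- ... while the ratio of `n + d` to `n` keeps it small.
  have hsmall : δ * n ≤ n + d := by
    exact_mod_cast hratio n hnΛ _ hndΛ (Nat.lt_add_of_pos_right d.pos)
  have hd : (0 : ℝ) < d := by exact_mod_cast d.pos
  rw [div_lt_iff₀ hδ'] at hR
  nlinarith [mul_le_mul_of_nonneg_right hgrowth hδ'.le, mul_lt_mul_of_pos_right hR hd]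

theorem BoundedDifferences.eventually_add_lt (hΛ : BoundedDifferences Λ) (L : ℕ) :
    ∀ᶠ n in atTop, n ∈ Λ → ∀ n' ∈ Λ, n' < n → n' + L < n := by
  obtain ⟨R, hR⟩ := hΛ
  have hfinite (d : ℕ+) : ∀ᶠ n in atTop, ¬(n ∈ Λ ∧ n + d ∈ Λ) := by
    rw [← Nat.cofinite_eq_atTop, eventually_cofinite]
    simpa only [not_not] using (Set.encard_le_coe_iff.1 (hR d)).1
  have hshift : ∀ᶠ n in atTop, ∀ d ∈ Finset.Icc 1 L, ¬(n - d ∈ Λ ∧ n - d + d ∈ Λ) :=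
    (eventually_all_finset _).2 fun d hd =>
      (tendsto_sub_atTop_nat d).eventually (hfinite ⟨d, (Finset.mem_Icc.1 hd).1⟩)
  filter_upwards [hshift] with n hn hnΛ n' hn' hlt
  by_contra hle
  apply hn (n - n') (Finset.mem_Icc.2 ⟨by omega, by omega⟩)
  rw [Nat.sub_sub_self hlt.le, Nat.add_sub_cancel' hlt.le]
  exact ⟨hn', hnΛ⟩

theorem BoundedDifferences.tsum_tsum_differencesFrom_ne_top (hΛ : BoundedDifferences Λ)
    {w : ℕ+ → ℝ≥0∞} (hw : ∑' d, w d ≠ ∞) :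
    ∑' n, ∑' d : differencesFrom Λ n, w d ≠ ∞ := by
  obtain ⟨R, hR⟩ := hΛ
  refine ne_top_of_le_ne_top (ENNReal.mul_ne_top (ENNReal.natCast_ne_top R) hw) ?_
  calc ∑' n, ∑' d : differencesFrom Λ n, w d
      = ∑' n, ∑' d, (differencesFrom Λ n).indicator w d := by simp only [tsum_subtype]
    _ = ∑' (d : ℕ+) (n : ℕ), {n | n ∈ Λ ∧ n + d ∈ Λ}.indicator (fun _ => w d) n :=
        ENNReal.tsum_comm
    _ = ∑' d : ℕ+, {n | n ∈ Λ ∧ n + d ∈ Λ}.encard * w d := by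
        simp only [← tsum_subtype, ENNReal.tsum_set_const]
    _ ≤ ∑' d, R * w d := by
        gcongr with d
        exact_mod_cast hR d
    _ = R * ∑' d, w d := ENNReal.tsum_mul_left

end Differences

section Series

open Filter

theorem tsum_mul_sq_le_tsum_sq_mul_tsum_sq {ι : Type*} (a b : ι → ℝ≥0∞) :
    (∑' i, a i * b i) ^ 2 ≤ (∑' i, a i ^ 2) * ∑' i, b i ^ 2 := by
  let _ : MeasurableSpace ι := ⊤
  have hHolder := ENNReal.lintegral_mul_le_Lp_mul_Lq MeasureTheory.Measure.count
    Real.HolderConjugate.two_two (f := a) (g := b)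
    measurable_from_top.aemeasurable measurable_from_top.aemeasurable
  simp only [MeasureTheory.lintegral_count, Pi.mul_apply, ENNReal.rpow_two] at hHolder
  calc (∑' i, a i * b i) ^ 2
      ≤ ((∑' i, a i ^ 2) ^ (1 / 2 : ℝ) * (∑' i, b i ^ 2) ^ (1 / 2 : ℝ)) ^ 2 := by gcongr
    _ = (∑' i, a i ^ 2) * ∑' i, b i ^ 2 := by
        rw [mul_pow, ← ENNReal.rpow_mul_natCast, ← ENNReal.rpow_mul_natCast]
        norm_num

theorem enorm_le_tsum_enorm_add_of_hasSum_zero {E : Type*} [NormedAddCommGroup E] {a : ℕ → E}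
    (ha : HasSum a 0) {i : ℕ} (hi : ∀ j < i, a j = 0) :
    ‖a i‖ₑ ≤ ∑' d : ℕ+, ‖a (i + d)‖ₑ := by
  have hsplit := ha.summable.sum_add_tsum_nat_add (i + 1)
  rw [ha.tsum_eq, Finset.sum_range_succ,
    Finset.sum_eq_zero fun j hj => hi j (Finset.mem_range.1 hj), zero_add] at hsplit
  rw [eq_neg_of_add_eq_zero_left hsplit, enorm_neg,
    tsum_pnat_eq_tsum_succ (f := fun d => ‖a (i + d)‖ₑ)]
  simpa only [add_comm, add_left_comm] using
    enorm_tsum_le_tsum_enorm (f := fun d => a (d + (i + 1)))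

/-- A discrete Gronwall inequality: once the tail sum of `h` is less than `1`, summing the bounds
shows that the tail sum of `b` is at most a proper fraction of itself. -/
theorem eventually_eq_zero_of_le_mul_tsum_add {b h : ℕ → ℝ≥0∞} (hb : ∑' n, b n ≠ ∞)
    (hh : ∑' n, h n ≠ ∞) (hle : ∀ᶠ n in atTop, b n ≤ h n * ∑' k, b (n + k)) :
    ∀ᶠ n in atTop, b n = 0 := by
  have hsmall : ∀ᶠ m in atTop, ∑' k, h (k + m) < 1 :=
    (ENNReal.tendsto_sum_nat_add h hh).eventually (gt_mem_nhds one_pos)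
  obtain ⟨m, hm, hbm⟩ := (hsmall.and (eventually_forall_ge_atTop.2 hle)).exists
  set B := ∑' k, b (k + m) with hB
  have hB_ne_top : B ≠ ∞ :=
    ne_top_of_le_ne_top hb (ENNReal.tsum_comp_le_tsum_of_injective (add_left_injective m) b)
  have htail (k : ℕ) : ∑' l, b (k + m + l) ≤ B := by
    rw [hB]
    simpa only [add_right_comm] using
      ENNReal.tsum_comp_le_tsum_of_injective (add_right_injective k) (fun l => b (l + m))
  have hB_le : B ≤ (∑' k, h (k + m)) * B := by
    calc B ≤ ∑' k, h (k + m) * B := ENNReal.tsum_le_tsum fun k =>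
          (hbm _ (Nat.le_add_left m k)).trans (mul_le_mul_right (htail k) _)
      _ = (∑' k, h (k + m)) * B := ENNReal.tsum_mul_right
  have hB_zero : B = 0 := by
    by_contra hB_ne
    exact hB_le.not_gt (by simpa using ENNReal.mul_lt_mul_left hB_ne hB_ne_top hm)
  filter_upwards [eventually_ge_atTop m] with n hn
  simpa only [Nat.sub_add_cancel hn] using ENNReal.tsum_eq_zero.1 hB_zero (n - m)

end Series

section Projections

open Filter

variable {𝕜 E : Type*} [RCLike 𝕜] [NormedAddCommGroup E] [InnerProductSpace 𝕜 E]

theorem mem_orthogonal_span_iff {s : Set E} {x : E} :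
    x ∈ (Submodule.span 𝕜 s)ᗮ ↔ ∀ u ∈ s, ⟪x, u⟫_𝕜 = 0 := by
  rw [← Submodule.span_singleton_le_iff_mem, ← Submodule.isOrtho_iff_le, Submodule.isOrtho_span]
  simp

theorem topologicalClosure_span_eq_top_iff [CompleteSpace E] {s : Set E} :
    (Submodule.span 𝕜 s).topologicalClosure = ⊤ ↔ ∀ x, (∀ u ∈ s, ⟪x, u⟫_𝕜 = 0) → x = 0 := by
  simp only [Submodule.topologicalClosure_eq_top_iff, Submodule.eq_bot_iff, mem_orthogonal_span_iff]

theorem inner_starProjection_of_mem_left {U : Submodule 𝕜 E} [U.HasOrthogonalProjection] {u : E}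
    (hu : u ∈ U) (x : E) : ⟪u, U.starProjection x⟫_𝕜 = ⟪u, x⟫_𝕜 := by
  rw [← U.inner_starProjection_left_eq_right, Submodule.starProjection_eq_self_iff.2 hu]

theorem enorm_inner_le_mul_enorm_starProjection {U : Submodule 𝕜 E} [U.HasOrthogonalProjection]
    {u : E} (hu : u ∈ U) (x : E) : ‖⟪u, x⟫_𝕜‖ₑ ≤ ‖u‖ₑ * ‖U.starProjection x‖ₑ := by
  rw [← inner_starProjection_of_mem_left hu]
  simp only [enorm_eq_nnnorm]
  exact_mod_cast nnnorm_inner_le_nnnorm (𝕜 := 𝕜) u (U.starProjection x)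

theorem exists_inner_ne_zero_of_mem_topologicalClosure_span {s : Set E} {x : E} (hx₀ : x ≠ 0)
    (hx : x ∈ (Submodule.span 𝕜 s).topologicalClosure) : ∃ u ∈ s, ⟪u, x⟫_𝕜 ≠ 0 := by
  by_contra! h
  have horth : x ∈ (Submodule.span 𝕜 s).topologicalClosureᗮ := by
    rw [Submodule.orthogonal_closure, mem_orthogonal_span_iff]
    exact fun u hu => inner_eq_zero_symm.1 (h u hu)
  exact hx₀ (inner_self_eq_zero.1 (Submodule.inner_right_of_mem_orthogonal hx horth))

theorem eventually_nnnorm_sq_le_mul_sum_inner_of_isCompact {K : Set E} (hK : IsCompact K)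
    (v : ℕ → E) (p : ℕ → Prop) [DecidablePred p] (hv : ∀ x ∈ K, ∃ i, p i ∧ ⟪v i, x⟫_𝕜 ≠ 0) :
    ∀ᶠ L : ℕ in atTop, ∀ x ∈ K,
      ‖x‖₊ ^ 2 ≤ L * ∑ i ∈ Finset.range L with p i, ‖⟪v i, x⟫_𝕜‖₊ ^ 2 := by
  set F : ℕ → E → NNReal := fun L x =>
    L * ∑ i ∈ Finset.range L with p i, ‖⟪v i, x⟫_𝕜‖₊ ^ 2 with hF
  have hF_mono (x : E) : Monotone fun L => F L x := fun L L' hL => by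
    simp only [hF]
    gcongr
  have hF_unbounded {x : E} (hx : x ∈ K) : ∃ L, ‖x‖₊ ^ 2 < F L x := by
    obtain ⟨i, hpi, hi⟩ := hv x hx
    have hpos : 0 < ‖⟪v i, x⟫_𝕜‖₊ ^ 2 := pow_pos (nnnorm_pos.2 hi) 2
    obtain ⟨M, hM⟩ := exists_nat_gt (‖x‖₊ ^ 2 / ‖⟪v i, x⟫_𝕜‖₊ ^ 2)
    refine ⟨max M (i + 1), ((div_lt_iff₀ hpos).1 hM).trans_le ?_⟩
    simp only [hF]
    gcongr
    · exact le_max_left M (i + 1)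
    · exact Finset.single_le_sum (f := fun i => ‖⟪v i, x⟫_𝕜‖₊ ^ 2) (fun _ _ => zero_le)
        (by simp [hpi])
  obtain ⟨L, hL⟩ := hK.elim_directed_cover (fun L => {x | ‖x‖₊ ^ 2 < F L x})
    (fun L => isOpen_lt (by fun_prop) (by fun_prop))
    (fun x hx => Set.mem_iUnion.2 (hF_unbounded hx))
    (directed_of_isDirected_le fun L L' hLL' x hx => lt_of_lt_of_le hx (hF_mono x hLL'))
  filter_upwards [eventually_ge_atTop L] with L' hL' x hx
  exact (hL hx).le.trans (hF_mono x hL')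

end Projections

section CompleteRelativeCompactness

open Filter

theorem CRC.eventually_enorm_starProjection_sq_le [CompleteSpace X] {a : ℕ → X} (ha : CRC a)
    (v : ℕ → X) (p : ℕ → Prop) [DecidablePred p] :
    ∀ᶠ L : ℕ in atTop, ∀ n,
      ‖(Submodule.span ℂ (v '' {i | p i})).topologicalClosure.starProjection (a n)‖ₑ ^ 2 ≤
        L * ∑ i ∈ Finset.range L with p i, ‖⟪v i, a n⟫_ℂ‖ₑ ^ 2 := by
  set U := (Submodule.span ℂ (v '' {i | p i})).topologicalClosure
  have hvU {i : ℕ} (hi : p i) : v i ∈ U :=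
    Submodule.le_topologicalClosure _ (Submodule.subset_span (Set.mem_image_of_mem v hi))
  have hcompact := ha U.starProjection
    ⟨fun x => Submodule.starProjection_eq_self_iff.2 (U.starProjection_apply_mem x),
      U.inner_starProjection_left_eq_right⟩
  set K := closure {u : X | ∃ k, U.starProjection (a k) ≠ 0 ∧
    u = ‖U.starProjection (a k)‖⁻¹ • U.starProjection (a k)}
  have hKU : K ⊆ U ∩ {x | ‖x‖ = 1} := by
    refine closure_minimal ?_ ((Submodule.isClosed_topologicalClosure _).inter
      (isClosed_eq continuous_norm continuous_const))
    rintro _ ⟨n, hn, rfl⟩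
    exact ⟨U.smul_of_tower_mem _ (U.starProjection_apply_mem _), by simp [norm_smul, hn]⟩
  have hdetect : ∀ x ∈ K, ∃ i, p i ∧ ⟪v i, x⟫_ℂ ≠ 0 := fun x hx => by
    have hx₀ : x ≠ 0 := norm_ne_zero_iff.1 ((hKU hx).2.trans_ne one_ne_zero)
    simpa using exists_inner_ne_zero_of_mem_topologicalClosure_span hx₀ (hKU hx).1
  filter_upwards [eventually_nnnorm_sq_le_mul_sum_inner_of_isCompact hcompact v p hdetect]
    with L hL n
  suffices ‖U.starProjection (a n)‖₊ ^ 2 ≤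
      L * ∑ i ∈ Finset.range L with p i, ‖⟪v i, U.starProjection (a n)⟫_ℂ‖₊ ^ 2 by
    rw [Finset.sum_congr rfl fun i hi => by
      rw [inner_starProjection_of_mem_left (hvU (Finset.mem_filter.1 hi).2)]] at this
    simp only [enorm_eq_nnnorm]
    exact_mod_cast this
  rcases eq_or_ne (U.starProjection (a n)) 0 with h₀ | h₀
  · simp [h₀]
  · have hscaled := hL _ (subset_closure ⟨n, h₀, rfl⟩)
    have hpos : 0 < ‖U.starProjection (a n)‖₊⁻¹ ^ 2 := pow_pos (inv_pos.2 (nnnorm_pos.2 h₀)) 2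
    refine le_of_mul_le_mul_left ?_ hpos
    simpa [RCLike.real_smul_eq_coe_smul (K := ℂ), inner_smul_right, nnnorm_smul, mul_pow,
      ← Finset.mul_sum, mul_left_comm] using hscaled

/-- The closed span of the `a i` with `i ≡ r (mod N)`. -/
def residueSpan (a : ℕ → X) (N r : ℕ) : Submodule ℂ X :=
  (Submodule.span ℂ (a '' {i | i ≡ r [MOD N]})).topologicalClosure

theorem mem_residueSpan (a : ℕ → X) {N i r : ℕ} (h : i ≡ r [MOD N]) : a i ∈ residueSpan a N r :=
  Submodule.le_topologicalClosure _ (Submodule.subset_span (Set.mem_image_of_mem a h))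

theorem residueSpan_mod (a : ℕ → X) (N r : ℕ) : residueSpan a N (r % N) = residueSpan a N r := by
  simp only [residueSpan, Nat.ModEq, Nat.mod_mod]

instance [CompleteSpace X] (a : ℕ → X) (N r : ℕ) : (residueSpan a N r).HasOrthogonalProjection := by
  unfold residueSpan; infer_instance

theorem CRC.exists_enorm_residueSpan_starProjection_sq_le [CompleteSpace X] {a : ℕ → X}
    (ha : CRC a) (v : ℕ → X) {N : ℕ} (hN : 0 < N) :
    ∃ L : ℕ, ∀ n, ‖(residueSpan v N n).starProjection (a n)‖ₑ ^ 2 ≤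
      L * ∑ i ∈ Finset.range L with i ≡ n [MOD N], ‖⟪v i, a n⟫_ℂ‖ₑ ^ 2 := by
  have hresidue (r : ℕ) : ∀ᶠ L : ℕ in atTop, ∀ n,
      ‖(residueSpan v N r).starProjection (a n)‖ₑ ^ 2 ≤
        L * ∑ i ∈ Finset.range L with i ≡ r [MOD N], ‖⟪v i, a n⟫_ℂ‖ₑ ^ 2 :=
    ha.eventually_enorm_starProjection_sq_le v (· ≡ r [MOD N])
  obtain ⟨L, hL⟩ := ((eventually_all_finset (Finset.range N)).2 fun r _ => hresidue r).exists
  refine ⟨L, fun n => ?_⟩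
  have hfilter : {i ∈ Finset.range L | i ≡ n % N [MOD N]} = {i ∈ Finset.range L | i ≡ n [MOD N]} :=
    Finset.filter_congr fun i _ => by simp only [Nat.ModEq, Nat.mod_mod]
  simpa only [hfilter, residueSpan_mod] using hL (n % N) (Finset.mem_range.2 (Nat.mod_lt n hN)) n

end CompleteRelativeCompactness

section Hardy

open Filter

theorem bshift_iterate_apply (f : H2 X) (k n : ℕ) : (bshift^[k] f) n = f (n + k) := by
  induction k generalizing n with
  | zero => rfl
  | succ k ih =>
    rw [Function.iterate_succ_apply', ← add_assoc, add_right_comm, ← ih (n + 1)]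
    rfl

theorem tsum_enorm_sq_ne_top (f : H2 X) : ∑' n, ‖f n‖ₑ ^ 2 ≠ ∞ := by
  have hsummable : Summable fun n => ‖f n‖₊ ^ 2 := by
    rw [← NNReal.summable_coe]
    simpa using (memℓp_gen_iff (by norm_num)).1 (lp.memℓp f)
  simpa [enorm_eq_nnnorm] using ENNReal.tsum_coe_ne_top_iff_summable.2 hsummable

variable {N : ℕ} {f g : H2 X}

theorem hasSum_inner_bshift_iterate (f g : H2 X) (k : ℕ) :
    HasSum (fun j => ⟪g j, f (j + k)⟫_ℂ) ⟪g, bshift^[k] f⟫_ℂ := by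
  simpa only [bshift_iterate_apply] using lp.hasSum_inner (𝕜 := ℂ) g (bshift^[k] f)

theorem enorm_inner_le_tsum_differencesFrom {i k : ℕ} (hg : ⟪g, bshift^[k] f⟫_ℂ = 0)
    (hik : i + k ∈ spec f) (hgap : ∀ n ∈ spec f, n < i + k → n + i < i + k) :
    ‖⟪g i, f (i + k)⟫_ℂ‖ₑ ≤
      ∑' d : differencesFrom (spec f) (i + k), ‖⟪g (i + d), f (i + k + d)⟫_ℂ‖ₑ := by
  have hearly : ∀ j < i, ⟪g j, f (j + k)⟫_ℂ = 0 := fun j hj => by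
    have hj : f (j + k) = 0 := by
      by_contra hne
      have := hgap _ hne (by omega)
      omega
    rw [hj, inner_zero_right]
  have hle := enorm_le_tsum_enorm_add_of_hasSum_zero (hg ▸ hasSum_inner_bshift_iterate f g k) hearly
  simp only [add_right_comm i _ k] at hle
  have hsupport : Function.support (fun d : ℕ+ => ‖⟪g (i + d), f (i + k + d)⟫_ℂ‖ₑ) ⊆
      differencesFrom (spec f) (i + k) := fun d hd =>
    ⟨hik, fun h₀ => hd (by simp only [h₀, inner_zero_right, enorm_zero])⟩
  exact hle.trans_eq (tsum_subtype_eq_of_support_subset hsupport).symm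

theorem enorm_inner_sq_le_mul_tsum {i n : ℕ} {b : ℕ → ℝ≥0∞}
    (hg : ∀ k, ⟪g, bshift^[N * k] f⟫_ℂ = 0)
    (hb : ∀ i n, i ≡ n [MOD N] → ‖⟪g i, f n⟫_ℂ‖ₑ ≤ ‖g i‖ₑ * b n)
    (hin : i ≡ n [MOD N]) (hile : i ≤ n) (hn : n ∈ spec f)
    (hgap : ∀ n' ∈ spec f, n' < n → n' + i < n) :
    ‖⟪g i, f n⟫_ℂ‖ₑ ^ 2 ≤
      (∑' d : differencesFrom (spec f) n, ‖g (i + d)‖ₑ ^ 2) * ∑' k, b (n + k) ^ 2 := by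
  obtain ⟨k, hk⟩ := (Nat.modEq_iff_dvd' hile).1 hin
  obtain rfl : n = i + N * k := by omega
  calc ‖⟪g i, f (i + N * k)⟫_ℂ‖ₑ ^ 2
      ≤ (∑' d : differencesFrom (spec f) (i + N * k),
          ‖g (i + d)‖ₑ * b (i + N * k + d)) ^ 2 := by
        gcongr
        refine (enorm_inner_le_tsum_differencesFrom (hg k) hn hgap).trans ?_
        gcongr with d
        exact hb _ _ (hin.add_right _)
    _ ≤ (∑' d : differencesFrom (spec f) (i + N * k), ‖g (i + d)‖ₑ ^ 2) *
          ∑' d : differencesFrom (spec f) (i + N * k), b (i + N * k + d) ^ 2 :=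
        tsum_mul_sq_le_tsum_sq_mul_tsum_sq _ _
    _ ≤ (∑' d : differencesFrom (spec f) (i + N * k), ‖g (i + d)‖ₑ ^ 2) *
          ∑' l, b (i + N * k + l) ^ 2 := by
        gcongr
        exact ENNReal.tsum_comp_le_tsum_of_injective
          (PNat.coe_injective.comp Subtype.val_injective) fun l => b (i + N * k + l) ^ 2

theorem tsum_tsum_differencesFrom_enorm_sq_ne_top {Λ : Set ℕ} (hΛ : BoundedDifferences Λ)
    (g : H2 X) (L : ℕ) :
    ∑' n, L * ∑ i ∈ Finset.range L, ∑' d : differencesFrom Λ n, ‖g (i + d)‖ₑ ^ 2 ≠ ∞ := by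
  rw [ENNReal.tsum_mul_left, Summable.tsum_finsetSum fun _ _ => ENNReal.summable]
  refine ENNReal.mul_ne_top (ENNReal.natCast_ne_top L) (ENNReal.sum_ne_top.2 fun i _ => ?_)
  refine hΛ.tsum_tsum_differencesFrom_ne_top (w := fun d => ‖g (i + d)‖ₑ ^ 2) ?_
  exact ne_top_of_le_ne_top (tsum_enorm_sq_ne_top g) (ENNReal.tsum_comp_le_tsum_of_injective
    ((add_right_injective i).comp PNat.coe_injective) fun n => ‖g n‖ₑ ^ 2)

theorem eventually_inner_eq_zero_of_inner_bshift_iterate_eq_zero [CompleteSpace X] (hN : 0 < N)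
    (hf : BoundedDifferences (spec f)) (hcrc : CRC f) (hg : ∀ k, ⟪g, bshift^[N * k] f⟫_ℂ = 0) :
    ∀ᶠ n in atTop, ∀ i, i ≡ n [MOD N] → ⟪g i, f n⟫_ℂ = 0 := by
  set b : ℕ → ℝ≥0∞ := fun n => ‖(residueSpan g N n).starProjection (f n)‖ₑ
  have hinner (i n : ℕ) (hin : i ≡ n [MOD N]) : ‖⟪g i, f n⟫_ℂ‖ₑ ≤ ‖g i‖ₑ * b n :=
    enorm_inner_le_mul_enorm_starProjection (mem_residueSpan g hin) (f n)
  obtain ⟨L, hL⟩ := hcrc.exists_enorm_residueSpan_starProjection_sq_le g hN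
  have hrecursive : ∀ᶠ n in atTop, b n ^ 2 ≤
      (L * ∑ i ∈ Finset.range L, ∑' d : differencesFrom (spec f) n, ‖g (i + d)‖ₑ ^ 2) *
        ∑' k, b (n + k) ^ 2 := by
    filter_upwards [hf.eventually_add_lt L, eventually_ge_atTop L] with n hgap hLn
    by_cases hn : n ∈ spec f
    · refine (hL n).trans ?_
      rw [mul_assoc, Finset.sum_mul]
      gcongr
      refine (Finset.sum_le_sum fun i hi => ?_).trans
        (Finset.sum_le_sum_of_subset (Finset.filter_subset _ _))
      obtain ⟨hiL, hin⟩ := Finset.mem_filter.1 hi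
      have hiL := Finset.mem_range.1 hiL
      refine enorm_inner_sq_le_mul_tsum hg hinner hin (by omega) hn fun n' hn' hlt => ?_
      have := hgap hn n' hn' hlt
      omega
    · simp [b, not_not.1 hn]
  have hb_sum : ∑' n, b n ^ 2 ≠ ∞ := by
    refine ne_top_of_le_ne_top (tsum_enorm_sq_ne_top f) (ENNReal.tsum_le_tsum fun n => ?_)
    gcongr
    exact enorm_le_iff_norm_le.2 (Submodule.norm_starProjection_apply_le _ _)
  filter_upwards [eventually_eq_zero_of_le_mul_tsum_add hb_sum
    (tsum_tsum_differencesFrom_enorm_sq_ne_top hf g L) hrecursive] with n hbn i hin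
  simpa [pow_eq_zero_iff two_ne_zero |>.1 hbn] using hinner i n hin

end Hardy

section Blocks

variable {N : ℕ} {f : H2 X}

theorem EfPow_eq_top_iff [CompleteSpace X] :
    EfPow f N = ⊤ ↔ ∀ g : H2 X, (∀ k, ⟪g, bshift^[N * k] f⟫_ℂ = 0) → g = 0 := by
  simp [EfPow, topologicalClosure_span_eq_top_iff]

/-- The closed span in `X^N` of the blocks `(a (Nk), …, a (Nk + N - 1))`, `k ≥ m`. -/
def blockSpan (a : ℕ → X) (N m : ℕ) : Submodule ℂ (PiLp 2 fun _ : Fin N => X) :=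
  (Submodule.span ℂ {v : PiLp 2 fun _ : Fin N => X |
      ∃ k ≥ m, v = fun i : Fin N => a (N * k + i)}).topologicalClosure

theorem blockSpan_eq_top_iff [CompleteSpace X] {a : ℕ → X} {m : ℕ} :
    blockSpan a N m = ⊤ ↔
      ∀ w : PiLp 2 fun _ : Fin N => X, (∀ k ≥ m, ∑ i, ⟪w i, a (N * k + i)⟫_ℂ = 0) → w = 0 := by
  rw [blockSpan, topologicalClosure_span_eq_top_iff]
  refine forall_congr' fun w => imp_congr_left ⟨fun h k hk => ?_, ?_⟩
  · simpa [PiLp.inner_apply] using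
      h (WithLp.toLp 2 fun i : Fin N => a (N * k + i)) ⟨k, hk, rfl⟩
  · rintro h v ⟨k, hk, hv⟩
    simpa [PiLp.inner_apply, hv] using h k hk

/-- The polynomial `∑ᵢ w i z^{Nm + i}`, whose `m`-th block of coefficients is `w`. -/
def blockMonomial (m : ℕ) (w : PiLp 2 fun _ : Fin N => X) : H2 X :=
  ∑ i : Fin N, lp.single 2 (N * m + i) (w i)

theorem inner_blockMonomial (m : ℕ) (w : PiLp 2 fun _ : Fin N => X) (h : H2 X) :
    ⟪blockMonomial m w, h⟫_ℂ = ∑ i : Fin N, ⟪w i, h (N * m + i)⟫_ℂ := by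
  simp [blockMonomial, lp.inner_single_left]

theorem blockMonomial_apply (m : ℕ) (w : PiLp 2 fun _ : Fin N => X) (i : Fin N) :
    blockMonomial m w (N * m + i) = w i := by
  rw [blockMonomial, lp.coeFn_sum, Finset.sum_apply, Finset.sum_eq_single i]
  · exact lp.single_apply_self ..
  · exact fun j _ hj => lp.single_apply_ne _ _ _ (by simpa [Fin.val_inj] using hj.symm)
  · simp

theorem blockSpan_eq_top_of_EfPow_eq_top [CompleteSpace X] (hcyclic : EfPow f N = ⊤) (m : ℕ) :
    blockSpan f N m = ⊤ := by
  refine blockSpan_eq_top_iff.2 fun w hw => ?_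
  have hzero : blockMonomial m w = 0 := EfPow_eq_top_iff.1 hcyclic _ fun k => by
    rw [inner_blockMonomial, ← hw (m + k) (Nat.le_add_right m k)]
    simp only [bshift_iterate_apply, mul_add, add_right_comm]
  ext i
  rw [← blockMonomial_apply m w i, hzero]
  rfl

theorem eq_zero_of_blockSpan_eq_top [CompleteSpace X] (hN : 0 < N) {a g : ℕ → X} {m : ℕ}
    (hblocks : blockSpan a N m = ⊤)
    (hg : ∀ n ≥ m, ∀ i, i ≡ n [MOD N] → ⟪g i, a n⟫_ℂ = 0) : g = 0 := by
  have hblock (l : ℕ) : WithLp.toLp 2 (fun i : Fin N => g (N * l + i)) = 0 :=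
    blockSpan_eq_top_iff.1 hblocks _ fun k hk =>
      Finset.sum_eq_zero fun i _ => hg _ (by nlinarith) _ (by simp [Nat.ModEq])
  funext n
  simpa [Nat.div_add_mod] using congrArg (· ⟨n % N, Nat.mod_lt n hN⟩) (hblock (n / N))

end Blocks

theorem lacunary_cyclic_pow_iff_general [CompleteSpace X] {N : ℕ} (hN : 1 ≤ N) {f : H2 X}
    (hf : BoundedDifferences (spec f)) (hcrc : CRC f) :
    EfPow f N = ⊤ ↔ ∀ m, blockSpan f N m = ⊤ := by
  refine ⟨blockSpan_eq_top_of_EfPow_eq_top, fun hblocks => ?_⟩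
  refine EfPow_eq_top_iff.2 fun g hg => ?_
  obtain ⟨m, hm⟩ := Filter.eventually_atTop.1
    (eventually_inner_eq_zero_of_inner_bshift_iterate_eq_zero hN hf hcrc hg)
  exact lp.ext (eq_zero_of_blockSpan_eq_top hN (hblocks m) hm)

/-- A lacunary series with c.r.c. coefficients is cyclic for `S*^N` iff for every `m` the
closed span in `X^N` of the block vectors `(f̂(Nk), …, f̂(Nk+N−1))`, `k ≥ m`, is `X^N`. -/
theorem lacunary_cyclic_pow_iff {X : Type*} [NormedAddCommGroup X] [InnerProductSpace ℂ X] [CompleteSpace X]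
    [TopologicalSpace.SeparableSpace X]
    (N : ℕ) (hN : 1 ≤ N)
    (Λ : Set ℕ) (hΛ : HadLac Λ) (hΛinf : Λ.Infinite)
    (f : H2 X) (hspec : spec f ⊆ Λ) (hcrc : CRC fun k : ℕ => f k) :
    EfPow f N = ⊤ ↔
      ∀ m : ℕ,
        (Submodule.span ℂ {v : PiLp 2 fun _ : Fin N => X |
            ∃ k ≥ m, v = fun i : Fin N => f (N * k + i)}).topologicalClosure = ⊤ := by
  exact lacunary_cyclic_pow_iff_general hN (hΛ.mono hspec).boundedDifferences hcrc

end
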